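/- arXiv:1111.4493 — 5 statements merged into one kernel-verified Lean document; each statement's English description precedes it below -/
import Mathlib

section
/- Let k and n be positive integers with n ≥ 2k. If F is a family of k-element subsets of {1,…,n} such that every two members of F have nonempty intersection, then |F| ≤ C(n−1, k−1). Moreover, if n > 2k, then |F| = C(n−1, k−1) holds if and only if there exists an element x ∈ {1,…,n} such that F is exactly the family of all k-element subsets of {1,…,n} containing x. -/
/-!
Katona's circle method. In any circular order of the ground set, an intersecting family of `k`-sets
contains at most `k` of the arcs of length `k`. Averaged over all orders this is the
Erdős–Ko–Rado bound, so a family of extremal size contains exactly `k` arcs of every order, and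
when `2 * k < n` these arcs start at `k` consecutive points.

Since any two `k`-sets are connected by exchanges of single elements and some `k`-set is not in `F`,
there are `A ∈ F`, `x ∈ A` and `z ∉ A` such that `A - x + z ∉ F`. Let `B` be a `k`-set with
`x ∈ B` and `z ∉ B`. In the order `z`, `A \ B`, `A ∩ B - x`, `x`, `B \ A`, rest, the sets
`A - x + z`, `A`, `B` are arcs starting at `0`, `1` and `1 + #(A \ B)`. The first is not in `F` and
the second is, so the run of `k` arcs starts at `A` and includes `B`: every `k`-set containing
`x` but not `z` is in `F`. A member of `F` avoiding `x` would be disjoint from one of these.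
-/

namespace ErdosKoRado

open Finset
open scoped Nat Fin.CommRing

section CircularArcs

variable {n k : ℕ} [NeZero n] {S : Finset (Fin n)} {a i : Fin n}

/-- The arcs of length `k` of the circle `Fin n` that start at any two points of `S` meet: one of
the two starting points lies on the arc that starts at the other. -/
def ArcsMeet (k : ℕ) (S : Finset (Fin n)) : Prop :=
  ∀ i ∈ S, ∀ j ∈ S, (j - i).val < k ∨ (i - j).val < k

lemma card_filter_val_sub_lt (hk : k ≤ n) (a : Fin n) : #{i : Fin n | (i - a).val < k} = k := by
  rw [card_equiv (Equiv.subRight a) (t := {i | i.val < k}) (by simp), Fin.card_filter_val_lt,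
    min_eq_right hk]

lemma ArcsMeet.add_notMem (hS : ArcsMeet k S) (hi : i ∈ S) {t : ℕ} (hkt : k ≤ t)
    (htn : t + k ≤ n) (ht : t < n) : i + (t : Fin n) ∉ S := by
  intro hj
  have hval : ((t : Fin n) : ℕ) = t := Fin.val_cast_of_lt ht
  have hmeet := hS i hi _ hj
  simp only [add_sub_cancel_left, sub_add_cancel_left, Fin.val_neg, hval, ← Fin.val_eq_zero_iff]
    at hmeet
  split_ifs at hmeet <;> omega

/-- The part of `S` lying on the arc of length `k` starting at `a`, together with the translate by
`k` of the remaining part. When the arcs starting in `S` meet and `a ∈ S`, this moves all of `S`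
onto that arc without collisions, because two points of `S` are never at distance `k`. -/
def foldOntoArc (k : ℕ) (a : Fin n) (S : Finset (Fin n)) : Finset (Fin n) :=
  {i ∈ S | (i - a).val < k} ∪ {i ∈ S | ¬ (i - a).val < k}.image (· + (k : Fin n))

lemma ArcsMeet.card_foldOntoArc (hS : ArcsMeet k S) (hkn : 2 * k ≤ n) (hk : 0 < k) :
    #(foldOntoArc k a S) = #S := by
  rw [foldOntoArc, card_union_of_disjoint, card_image_of_injective _ (add_left_injective _),
    card_filter_add_card_filter_not]
  rw [disjoint_left]
  intro i hi hi'
  obtain ⟨j, hj, rfl⟩ := mem_image.1 hi'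
  exact hS.add_notMem (mem_filter.1 hj).1 le_rfl (by omega) (by omega) (mem_filter.1 hi).1

lemma ArcsMeet.foldOntoArc_subset (hS : ArcsMeet k S) (hkn : k < n) (ha : a ∈ S) :
    foldOntoArc k a S ⊆ ({i | (i - a).val < k} : Finset (Fin n)) := by
  refine union_subset (filter_subset_filter _ (subset_univ S)) (image_subset_iff.2 fun j hj => ?_)
  obtain ⟨hjS, hja⟩ := mem_filter.1 hj
  have haj : (a - j).val < k := (hS a ha j hjS).resolve_left hja
  have hjk : j + (k : Fin n) - a = k - (a - j) := by ring
  have hval : ((k : Fin n) : ℕ) = k := Fin.val_cast_of_lt hkn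
  have hne : (a - j).val ≠ 0 := by
    intro h
    obtain rfl : a = j := sub_eq_zero.1 (Fin.val_eq_zero_iff.1 h)
    exact hja haj
  rw [mem_filter_univ, hjk, Fin.sub_val_of_le (Fin.le_def.2 (by omega)), hval]
  omega

lemma ArcsMeet.card_le (hS : ArcsMeet k S) (hkn : 2 * k ≤ n) : #S ≤ k := by
  obtain rfl | ⟨a, ha⟩ := S.eq_empty_or_nonempty
  · simp
  · have hk : 0 < k := by have := hS a ha a ha; omega
    calc #S = #(foldOntoArc k a S) := (hS.card_foldOntoArc hkn hk).symm
      _ ≤ #{i : Fin n | (i - a).val < k} := card_le_card (hS.foldOntoArc_subset (by omega) ha)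
      _ = k := card_filter_val_sub_lt (by omega) a

lemma ArcsMeet.mem_or_sub_mem (hS : ArcsMeet k S) (hkn : 2 * k ≤ n) (hcard : #S = k) (ha : a ∈ S)
    (hi : (i - a).val < k) : i ∈ S ∨ i - (k : Fin n) ∈ S := by
  have hfold := eq_of_subset_of_card_le (hS.foldOntoArc_subset (by omega) ha) (by
    rw [hS.card_foldOntoArc hkn (by omega), card_filter_val_sub_lt (by omega), hcard])
  have hmem : i ∈ foldOntoArc k a S := by rw [hfold]; simpa using hi
  rcases mem_union.1 hmem with h | h
  · exact .inl (mem_filter.1 h).1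
  · obtain ⟨j, hj, rfl⟩ := mem_image.1 h
    rw [add_sub_cancel_right]
    exact .inr (mem_filter.1 hj).1

lemma ArcsMeet.add_mem (hS : ArcsMeet k S) (hkn : 2 * k < n) (hcard : #S = k) (ha : a ∈ S)
    (ha' : a - 1 ∉ S) {t : ℕ} (ht : t < k) : a + (t : Fin n) ∈ S := by
  have mem_or {t : ℕ} (ht : t < k) : a + (t : Fin n) ∈ S ∨ a + (t : Fin n) - (k : Fin n) ∈ S :=
    hS.mem_or_sub_mem hkn.le hcard ha
      (by rwa [add_sub_cancel_left, Fin.val_cast_of_lt (by omega)])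
  induction Nat.le_sub_one_of_lt ht using Nat.decreasingInduction with
  | self =>
    refine (mem_or ht).resolve_right fun h => ha' ?_
    convert h using 1
    rw [add_sub_assoc, Nat.cast_sub (by omega)]
    push_cast; ring
  | of_succ t htk ih =>
    refine (mem_or ht).resolve_right fun h => ?_
    refine hS.add_notMem h (Nat.le_succ k) (by omega) (by omega) ?_
    convert ih (by omega) using 1
    push_cast; ring

end CircularArcs

section Numberings

variable {X : Type*} [Fintype X]

lemma exists_numbering_lt_card_iff {α : Type*} [LinearOrder α] (c : X → α) :
    ∃ f : Numbering X, ∀ x a, f x < #{y | c y ≤ a} ↔ c x ≤ a := by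
  let e := Fintype.equivFin X
  let f : Numbering X := e.trans (Tuple.sort (c ∘ e.symm)).symm
  have hmono : Monotone (c ∘ f.symm) := Tuple.monotone_sort (c ∘ e.symm)
  refine ⟨f, fun x a => ?_⟩
  rw [card_equiv f (t := {i | (c ∘ f.symm) i ≤ a}) (by simp),
    Tuple.lt_card_le_iff_apply_le_of_monotone hmono, Function.comp_apply, f.symm_apply_apply]

lemma exists_numbering_isPrefix {ι : Type*} [Finite ι] [LinearOrder ι] {T : ι → Finset X}
    (hT : Monotone T) : ∃ f : Numbering X, ∀ i, f.IsPrefix (T i) := by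
  classical
  cases nonempty_fintype ι
  obtain ⟨f, hf⟩ := exists_numbering_lt_card_iff fun x => #{i | x ∉ T i}
  have mem_iff (i : ι) (x : X) : x ∈ T i ↔ #{j | x ∉ T j} ≤ #{j | j < i} := by
    constructor
    · intro hx
      refine card_le_card (monotone_filter_right _ fun j _ hj => ?_)
      exact lt_of_not_ge fun hij => hj (hT hij hx)
    · contrapose!
      intro hx
      refine card_lt_card ((ssubset_iff_of_subset ?_).2 ⟨i, by simpa using hx, by simp⟩)
      exact monotone_filter_right _ fun j _ hj hxj => hx (hT hj.le hxj)
  refine ⟨f, fun i x => ?_⟩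
  have hTi : ({y | #{j | y ∉ T j} ≤ #{j | j < i}} : Finset X) = T i := by
    ext y
    rw [mem_filter_univ, mem_iff]
  rw [mem_iff, ← hTi, hf]

/-- The arc of length `k` starting at position `i` in the circular order of `X` given by `f`.
Positions count from `0`, and the subtraction in `Fin` wraps around. -/
def arc (f : Numbering X) (k : ℕ) (i : Fin (Fintype.card X)) : Finset X :=
  {x | (f x - i).val < k}

lemma mem_arc {f : Numbering X} {k : ℕ} {i : Fin (Fintype.card X)} {x : X} :
    x ∈ arc f k i ↔ (f x - i).val < k :=
  mem_filter_univ x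

lemma arc_eq_sdiff [DecidableEq X] [Nonempty X] {f : Numbering X} {s t : Finset X} {k : ℕ}
    (hs : f.IsPrefix s) (ht : f.IsPrefix t) (hcard : #t = #s + k) :
    arc f k (#s : Fin (Fintype.card X)) = t \ s := by
  ext x
  have htX : #t ≤ Fintype.card X := card_le_univ t
  have hx : (f x).val < Fintype.card X := (f x).isLt
  rw [mem_arc, mem_sdiff, hs x, ht x, Fin.val_sub, Fin.val_natCast]
  obtain rfl | hk := k.eq_zero_or_pos
  · omega
  rw [Nat.mod_eq_of_lt (show #s < Fintype.card X by omega)]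
  obtain h | h := lt_or_ge (f x).val #s
  · rw [Nat.mod_eq_of_lt (by omega)]
    omega
  · rw [Nat.mod_eq_sub_mod (by omega), Nat.mod_eq_of_lt (by omega)]
    omega

lemma val_sub_lt_or_lt_of_mem_arc {f : Numbering X} {k : ℕ} {i j : Fin (Fintype.card X)} {x : X}
    (hi : x ∈ arc f k i) (hj : x ∈ arc f k j) : (j - i).val < k ∨ (i - j).val < k := by
  have : NeZero (Fintype.card X) := ⟨(Fin.pos i).ne'⟩
  rw [mem_arc] at hi hj
  obtain h | h := le_total (f x - i) (f x - j)
  · right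
    rw [← sub_sub_sub_cancel_left j i (f x), Fin.sub_val_of_le h]
    omega
  · left
    rw [← sub_sub_sub_cancel_left i j (f x), Fin.sub_val_of_le h]
    omega

variable [DecidableEq X] {k : ℕ} {F : Finset (Finset X)}

/-- The positions at which the arcs of length `k` that belong to `F` start. This is where the circle
method turns a family of sets into a set of points of a circle. -/
def starts (f : Numbering X) (k : ℕ) (F : Finset (Finset X)) : Finset (Fin (Fintype.card X)) :=
  {i | arc f k i ∈ F}

lemma mem_starts {f : Numbering X} {i : Fin (Fintype.card X)} :
    i ∈ starts f k F ↔ arc f k i ∈ F :=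
  mem_filter_univ i

lemma arcsMeet_starts (hF : (F : Set (Finset X)).Intersecting) (f : Numbering X) :
    ArcsMeet k (starts f k F) := by
  intro i hi j hj
  obtain ⟨x, hxi, hxj⟩ := not_disjoint_iff.1 (hF (mem_starts.1 hi) (mem_starts.1 hj))
  exact val_sub_lt_or_lt_of_mem_arc hxi hxj

lemma card_filter_arc_mem (hF : (F : Set (Finset X)).Sized k) (i : Fin (Fintype.card X)) :
    #{f : Numbering X | arc f k i ∈ F} = #F * (k ! * (Fintype.card X - k)!) := by
  have : NeZero (Fintype.card X) := ⟨(Fin.pos i).ne'⟩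
  let rotation : Numbering X ≃ Numbering X := (Equiv.refl X).equivCongr (Equiv.subRight i)
  have arc_eq_iff {A : Finset X} (hA : A ∈ F) (f : Numbering X) :
      arc f k i = A ↔ rotation f ∈ Numbering.prefixed A := by
    rw [Numbering.mem_prefixed, Numbering.IsPrefix, hF hA, Finset.ext_iff]
    simp only [mem_arc, iff_comm]
    rfl
  rw [card_eq_sum_card_fiberwise (f := (arc · k i)) (t := F) (by intro f hf; simpa using hf),
    ← smul_eq_mul, ← sum_const]
  refine sum_congr rfl fun A hA => ?_
  rw [← hF hA, ← Numbering.card_prefixed A, filter_filter]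
  refine card_equiv rotation fun f => ?_
  rw [← arc_eq_iff hA]
  simp only [hF hA, mem_filter_univ, and_iff_right_iff_imp]
  exact fun h => h ▸ hA

lemma sum_card_starts (hF : (F : Set (Finset X)).Sized k) :
    ∑ f : Numbering X, #(starts f k F) =
      Fintype.card X * (#F * (k ! * (Fintype.card X - k)!)) := by
  calc ∑ f : Numbering X, #(starts f k F)
      = ∑ i, #{f : Numbering X | arc f k i ∈ F} :=
        sum_card_bipartiteAbove_eq_sum_card_bipartiteBelow fun f i => arc f k i ∈ F
    _ = ∑ _i : Fin (Fintype.card X), #F * (k ! * (Fintype.card X - k)!) :=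
        sum_congr rfl fun i _ => card_filter_arc_mem hF i
    _ = Fintype.card X * (#F * (k ! * (Fintype.card X - k)!)) := by
        rw [sum_const, card_univ, Fintype.card_fin, smul_eq_mul]

end Numberings

section Families

lemma mul_choose_pred_mul_factorial {n k : ℕ} (hk : 0 < k) (hkn : k ≤ n) :
    n * ((n - 1).choose (k - 1) * (k ! * (n - k)!)) = n ! * k := by
  have hchoose : n * (n - 1).choose (k - 1) = n.choose k * k := by
    simpa only [Nat.sub_add_cancel hk, Nat.sub_add_cancel (hk.trans_le hkn)] using
      Nat.add_one_mul_choose_eq (n - 1) (k - 1)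
  calc n * ((n - 1).choose (k - 1) * (k ! * (n - k)!))
      = n * (n - 1).choose (k - 1) * (k ! * (n - k)!) := by ring
    _ = n.choose k * k ! * (n - k)! * k := by rw [hchoose]; ring
    _ = n ! * k := by rw [Nat.choose_mul_factorial_mul_factorial hkn]

lemma exists_insert_erase_notMem {X : Type*} [DecidableEq X] {𝒜 : Finset (Finset X)} {k : ℕ}
    (h𝒜 : (𝒜 : Set (Finset X)).Sized k) (hne : 𝒜.Nonempty) {B : Finset X} (hB : B ∉ 𝒜)
    (hBk : #B = k) : ∃ A ∈ 𝒜, ∃ x ∈ A, ∃ z ∉ A, insert z (A.erase x) ∉ 𝒜 := by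
  obtain ⟨A, hA, hmin⟩ := exists_min_image 𝒜 (fun A => #(A \ B)) hne
  have hAB : A ≠ B := fun h => hB (h ▸ hA)
  have hcard : #A = #B := (h𝒜 hA).trans hBk.symm
  obtain ⟨x, hxA, hxB⟩ := not_subset.1 fun h => hAB (eq_of_subset_of_card_le h hcard.ge)
  obtain ⟨z, hzB, hzA⟩ := not_subset.1 fun h => hAB (eq_of_subset_of_card_le h hcard.le).symm
  refine ⟨A, hA, x, hxA, z, hzA, fun h => (hmin _ h).not_gt (card_lt_card ?_)⟩
  rw [insert_sdiff_of_mem _ hzB, erase_sdiff_comm]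
  exact erase_ssubset (mem_sdiff.2 ⟨hxA, hxB⟩)

variable {X : Type*} [Fintype X] [DecidableEq X] {k : ℕ} {F : Finset (Finset X)}

lemma card_le_choose (hkn : 2 * k ≤ Fintype.card X) (hsized : (F : Set (Finset X)).Sized k)
    (hF : (F : Set (Finset X)).Intersecting) : #F ≤ (Fintype.card X - 1).choose (k - 1) := by
  let e : X ↪ Fin (Fintype.card X) := (Fintype.equivFin X).toEmbedding
  rw [← card_map (mapEmbedding e).toEmbedding]
  refine erdos_ko_rado ?_ ?_ (by omega)
  · simpa [Set.Intersecting] using hF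
  · simpa [Set.Sized] using hsized

lemma card_starts_of_card_eq (hk : 0 < k) (hkn : 2 * k ≤ Fintype.card X)
    (hsized : (F : Set (Finset X)).Sized k) (hF : (F : Set (Finset X)).Intersecting)
    (hcard : #F = (Fintype.card X - 1).choose (k - 1)) (f : Numbering X) :
    #(starts f k F) = k := by
  have : NeZero (Fintype.card X) := ⟨by omega⟩
  have hle : ∀ f ∈ (univ : Finset (Numbering X)), #(starts f k F) ≤ k :=
    fun f _ => (arcsMeet_starts hF f).card_le hkn
  refine (sum_eq_sum_iff_of_le hle).1 ?_ f (mem_univ f)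
  rw [sum_card_starts hsized, hcard, mul_choose_pred_mul_factorial hk (by omega), sum_const,
    card_univ, Fintype.card_numbering, smul_eq_mul]

lemma arc_add_mem [Nonempty X] (hkn : 2 * k < Fintype.card X)
    (hsized : (F : Set (Finset X)).Sized k) (hF : (F : Set (Finset X)).Intersecting)
    (hcard : #F = (Fintype.card X - 1).choose (k - 1)) {f : Numbering X}
    {i : Fin (Fintype.card X)} (hi : arc f k i ∈ F) (hi' : arc f k (i - 1) ∉ F) {t : ℕ}
    (ht : t < k) : arc f k (i + t) ∈ F := by
  rw [← mem_starts] at hi hi' ⊢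
  have hstarts : #(starts f k F) = k :=
    card_starts_of_card_eq (by omega) hkn.le hsized hF hcard f
  exact (arcsMeet_starts hF f).add_mem hkn hstarts hi hi' ht

lemma exists_numbering_arc_eq [Nonempty X] {A B : Finset X} {x z : X} (hA : #A = k) (hB : #B = k)
    (hxA : x ∈ A) (hxB : x ∈ B) (hzA : z ∉ A) (hzB : z ∉ B) :
    ∃ f : Numbering X, arc f k 0 = insert z (A.erase x) ∧ arc f k 1 = A ∧
      arc f k (1 + (#(A \ B) : ℕ)) = B := by
  have hchain : Monotone ![{z}, insert z (A \ B), insert z (A.erase x), insert z A,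
      insert z (A ∪ B)] := by
    simp only [monotone_vecCons, Matrix.cons_val_zero, subset_iff, mem_insert,
      mem_singleton, mem_sdiff, mem_erase, mem_union]
    grind [Subsingleton.monotone]
  obtain ⟨f, hf⟩ := exists_numbering_isPrefix hchain
  have hempty : f.IsPrefix ∅ := fun y => by simp
  have hz : f.IsPrefix {z} := hf 0
  have hdiff : f.IsPrefix (insert z (A \ B)) := hf 1
  have herase : f.IsPrefix (insert z (A.erase x)) := hf 2
  have hinsert : f.IsPrefix (insert z A) := hf 3
  have hunion : f.IsPrefix (insert z (A ∪ B)) := hf 4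
  refine ⟨f, ?_, ?_, ?_⟩
  · simpa using arc_eq_sdiff hempty herase (k := k) (by
      rw [card_insert_of_notMem (by simp [hzA]), card_erase_add_one hxA, card_empty, hA, zero_add])
  · have hsdiff : insert z A \ {z} = A := by grind
    have harc := arc_eq_sdiff hz hinsert (k := k) (by
      rw [card_insert_of_notMem hzA, card_singleton, hA, add_comm])
    rwa [hsdiff, card_singleton, Nat.cast_one] at harc
  · have hcard : #(insert z (A \ B)) = 1 + #(A \ B) := by
      rw [card_insert_of_notMem (by simp [hzA]), add_comm]
    have hsdiff : insert z (A ∪ B) \ insert z (A \ B) = B := by grind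
    have harc := arc_eq_sdiff hdiff hunion (k := k) (by
      rw [card_insert_of_notMem (by simp [hzA, hzB]), hcard, ← card_sdiff_add_card A B, hB]
      ring)
    rwa [hsdiff, hcard, Nat.cast_add, Nat.cast_one] at harc

lemma mem_of_insert_erase_notMem (hkn : 2 * k < Fintype.card X)
    (hsized : (F : Set (Finset X)).Sized k) (hF : (F : Set (Finset X)).Intersecting)
    (hcard : #F = (Fintype.card X - 1).choose (k - 1)) {A B : Finset X} {x z : X} (hA : A ∈ F)
    (hxA : x ∈ A) (hzA : z ∉ A) (hAz : insert z (A.erase x) ∉ F) (hB : #B = k) (hxB : x ∈ B)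
    (hzB : z ∉ B) : B ∈ F := by
  have : Nonempty X := ⟨x⟩
  obtain ⟨f, harc_zero, harc_one, harc_B⟩ := exists_numbering_arc_eq (hsized hA) hB hxA hxB hzA hzB
  have hAB : #(A \ B) < k := by
    rw [← hsized hA]
    exact card_lt_card ((ssubset_iff_of_subset sdiff_subset).2 ⟨x, hxA, by simp [hxB]⟩)
  rw [← harc_B]
  exact arc_add_mem hkn hsized hF hcard (harc_one ▸ hA) (by rwa [sub_self, harc_zero]) hAB

lemma exists_forall_mem_of_card_eq (hk : 0 < k) (hkn : 2 * k < Fintype.card X)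
    (hsized : (F : Set (Finset X)).Sized k) (hF : (F : Set (Finset X)).Intersecting)
    (hcard : #F = (Fintype.card X - 1).choose (k - 1)) : ∃ x, ∀ C ∈ F, x ∈ C := by
  obtain ⟨D, hD⟩ : F.Nonempty := card_pos.1 (hcard ▸ Nat.choose_pos (by omega))
  obtain ⟨B, hBD, hBk⟩ := exists_subset_card_eq (s := Dᶜ) (n := k) (by
    rw [card_compl, hsized hD]; omega)
  have hB : B ∉ F := fun h => hF hD h (disjoint_right.2 fun y hy => by simpa using hBD hy)
  obtain ⟨A, hA, x, hxA, z, hzA, hAz⟩ := exists_insert_erase_notMem hsized ⟨D, hD⟩ hB hBk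
  refine ⟨x, fun C hC => by_contra fun hxC => ?_⟩
  have hxz : x ≠ z := fun h => hzA (h ▸ hxA)
  obtain ⟨E, hxE, hEC, hEk⟩ := exists_subsuperset_card_eq (s := {x}) (t := (insert z C)ᶜ) (n := k)
    (by simp [hxz, hxC]) (by simpa) (by
      have hzC : #(insert z C) ≤ k + 1 := hsized hC ▸ card_insert_le z C
      rw [card_compl]
      omega)
  have hE : E ∈ F := mem_of_insert_erase_notMem hkn hsized hF hcard hA hxA hzA hAz hEk
    (hxE (mem_singleton_self x)) fun hz => by simpa using hEC hz
  exact hF hE hC (disjoint_left.2 fun y hyE hyC =>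
    mem_compl.1 (hEC hyE) (mem_insert_of_mem hyC))

lemma card_filter_card_eq_mem (hk : 0 < k) (x : X) :
    #{s : Finset X | #s = k ∧ x ∈ s} = (Fintype.card X - 1).choose (k - 1) := by
  rw [← card_univ, ← card_singleton x,
    ← card_filter_powersetCard_subset {x} univ k (subset_univ _) (by simpa)]
  congr 1
  ext s
  simp

end Families

end ErdosKoRado

open Finset ErdosKoRado in
theorem stmt_0_general {X : Type*} [Fintype X] [DecidableEq X] (k : ℕ) (hk : 0 < k)
    (h : 2 * k ≤ Fintype.card X) (F : Finset (Finset X)) (hcard : ∀ s ∈ F, #s = k)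
    (hint : ∀ s ∈ F, ∀ t ∈ F, (s ∩ t).Nonempty) :
    #F ≤ (Fintype.card X - 1).choose (k - 1) ∧
      (2 * k < Fintype.card X →
        (#F = (Fintype.card X - 1).choose (k - 1) ↔
          ∃ x : X, F = univ.filter (fun s : Finset X => #s = k ∧ x ∈ s))) := by
  have hF : (F : Set (Finset X)).Intersecting :=
    fun s hs t ht => not_disjoint_iff_nonempty_inter.2 (hint s hs t ht)
  refine ⟨card_le_choose h hcard hF, fun hkn => ⟨fun hext => ?_, ?_⟩⟩
  · obtain ⟨x, hx⟩ := exists_forall_mem_of_card_eq hk hkn hcard hF hext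
    refine ⟨x, eq_of_subset_of_card_le (fun s hs => ?_) ?_⟩
    · exact mem_filter.2 ⟨mem_univ s, hcard s hs, hx s hs⟩
    · rw [card_filter_card_eq_mem hk, hext]
  · rintro ⟨x, rfl⟩
    exact card_filter_card_eq_mem hk x

/-- Erdős–Ko–Rado theorem: if `n ≥ 2k`, an intersecting family of `k`-subsets of an
`n`-set has size at most `C(n-1, k-1)`; moreover if `n > 2k`, equality holds iff the
family consists of all `k`-subsets containing some fixed element. -/
theorem stmt_0 (n k : ℕ) (hk : 0 < k) (hn : 0 < n) (h : 2 * k ≤ n)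
    (F : Finset (Finset (Fin n)))
    (hcard : ∀ s ∈ F, s.card = k)
    (hint : ∀ s ∈ F, ∀ t ∈ F, (s ∩ t).Nonempty) :
    F.card ≤ (n - 1).choose (k - 1) ∧
      (2 * k < n →
        (F.card = (n - 1).choose (k - 1) ↔
          ∃ x : Fin n,
            F = Finset.univ.filter (fun s : Finset (Fin n) => s.card = k ∧ x ∈ s))) := by
  simpa only [Fintype.card_fin] using
    stmt_0_general k hk (by rwa [Fintype.card_fin]) F hcard hint
end

section
/- Let k and m be positive integers with m ≥ k + 1. If A is an intersecting collection of k-multisets with elements from {1,…,m}, then |A| ≤ C(m+k−2, k−1). -/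
/-!
Split `k`-multisets by their support. Those with support `S` arise by adding a multiset of
cardinality `k - |S|` drawn from `S`, so there are `C(k-1, k-|S|)` of them. That is also the number
of ways to complete `S` to a set of cardinality `k` using `k - 1` extra points. Hence `k`-multisets
on `α` are in bijection with the `k`-subsets of `α` enlarged by `k - 1` points, in such a way that
the support of a multiset becomes the trace of the set on `α`. Multisets with a common element go to
sets with a common element, and the Erdős–Ko–Rado theorem applies on `|α| + k - 1 ≥ 2k` points.
-/

open Finset

theorem erdos_ko_rado_of_fintype {α : Type*} [Fintype α] [DecidableEq α]
    {𝒜 : Finset (Finset α)} {r : ℕ} (h𝒜 : (𝒜 : Set (Finset α)).Intersecting)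
    (hsized : (𝒜 : Set (Finset α)).Sized r) (hr : r ≤ Fintype.card α / 2) :
    #𝒜 ≤ (Fintype.card α - 1).choose (r - 1) := by
  let e : Finset α ↪o Finset (Fin (Fintype.card α)) := mapEmbedding (Fintype.equivFin α).toEmbedding
  rw [← card_map e.toEmbedding]
  refine erdos_ko_rado ?_ ?_ hr
  · simpa only [Set.Intersecting, coe_map, Set.forall_mem_image, RelEmbedding.coe_toEmbedding, e,
      mapEmbedding_apply, disjoint_map] using h𝒜
  · simpa only [Set.Sized, coe_map, Set.forall_mem_image, RelEmbedding.coe_toEmbedding, e,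
      mapEmbedding_apply, card_map] using hsized

section SupportFibers

variable {α : Type*} [DecidableEq α] {k : ℕ} {S : Finset α}

theorem card_finset_sym (S : Finset α) (n : ℕ) : #(S.sym n) = (#S).multichoose n := by
  have S_eq : S = (univ : Finset S).map (.subtype _) := by
    rw [univ_eq_attach]
    exact attach_map_val.symm
  conv_lhs => rw [S_eq, sym_map, card_map, sym_univ, card_univ]
  rw [Sym.card_sym_eq_multichoose, Fintype.card_coe]

theorem finset_val_le_of_toFinset_eq {s : Multiset α} (h : s.toFinset = S) : S.val ≤ s := by
  rw [← h, Multiset.toFinset_val]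
  exact s.dedup_le

/-- The `k`-multisets with support `S` correspond to the `(k - |S|)`-multisets on `S`, by removing
one copy of each element of the support. -/
def symSupportFiberEquiv (hS : #S ≤ k) :
    {s : Sym α k // (s : Multiset α).toFinset = S} ≃ S.sym (k - #S) where
  toFun s :=
    ⟨.mk (s.1 - S.val) (by
        rw [Multiset.card_sub (finset_val_le_of_toFinset_eq s.2), Sym.card_coe, card_val]),
      mem_sym_iff.2 fun x hx => by
        simpa [← s.2] using Multiset.mem_of_le (Multiset.sub_le_self _ _) hx⟩
  invFun t := ⟨.mk (t.1 + S.val) (by simp [hS]), by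
    have support_subset : (t.1 : Multiset α).toFinset ⊆ S := fun x hx =>
      mem_sym_iff.1 t.2 x (by simpa using hx)
    simpa using support_subset⟩
  left_inv s :=
    Subtype.ext (Sym.ext (tsub_add_cancel_of_le (finset_val_le_of_toFinset_eq s.2)))
  right_inv t := Subtype.ext (Sym.ext (add_tsub_cancel_right _ _))

/-- The `k`-subsets of `α ⊕ β` whose trace on `α` is `S` correspond to the `(k - |S|)`-subsets of
`β`. -/
def toLeftFiberEquiv (β : Type*) [Fintype β] (hS : #S ≤ k) :
    {T : {T : Finset (α ⊕ β) // #T = k} // T.1.toLeft = S} ≃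
      powersetCard (k - #S) (univ : Finset β) where
  toFun T := ⟨T.1.1.toRight, by
    have card_add := card_toLeft_add_card_toRight (u := T.1.1)
    rw [T.2, T.1.2] at card_add
    exact mem_powersetCard_univ.2 (by omega)⟩
  invFun U := ⟨⟨S.disjSum U, by
    rw [card_disjSum, mem_powersetCard_univ.1 U.2, Nat.add_sub_of_le hS]⟩, toLeft_disjSum⟩
  left_inv T := Subtype.ext (Subtype.ext (disjSum_eq_iff.2 ⟨T.2.symm, rfl⟩))
  right_inv _ := Subtype.ext toRight_disjSum

theorem card_sym_sub_card_eq_card_powersetCard (hS : #S ≤ k) :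
    #(S.sym (k - #S)) = #(powersetCard (k - #S) (univ : Finset (Fin (k - 1)))) := by
  rw [card_finset_sym, Nat.multichoose_eq, card_powersetCard, card_univ, Fintype.card_fin,
    Nat.add_sub_of_le hS]

theorem exists_equiv_toLeft_eq_toFinset (α : Type*) [DecidableEq α] (k : ℕ) :
    ∃ e : Sym α k ≃ {T : Finset (α ⊕ Fin (k - 1)) // #T = k},
      ∀ s, (e s).1.toLeft = (s : Multiset α).toFinset := by
  suffices fiber_equiv : ∀ S : Finset α,
      Nonempty ({s : Sym α k // (s : Multiset α).toFinset = S} ≃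
        {T : {T : Finset (α ⊕ Fin (k - 1)) // #T = k} // T.1.toLeft = S}) from
    ⟨.ofFiberEquiv fun S => (fiber_equiv S).some,
      Equiv.ofFiberEquiv_map (f := fun s : Sym α k => (s : Multiset α).toFinset)
        (g := fun T : {T : Finset (α ⊕ Fin (k - 1)) // #T = k} => T.1.toLeft)
        fun S => (fiber_equiv S).some⟩
  intro S
  by_cases hS : #S ≤ k
  · exact ⟨(symSupportFiberEquiv hS).trans <|
      (equivOfCardEq (card_sym_sub_card_eq_card_powersetCard hS)).trans
        (toLeftFiberEquiv (Fin (k - 1)) hS).symm⟩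
  · have : IsEmpty {s : Sym α k // (s : Multiset α).toFinset = S} := ⟨fun s => hS <| by
      simpa [← s.2] using Multiset.toFinset_card_le (s.1 : Multiset α)⟩
    have : IsEmpty {T : {T : Finset (α ⊕ Fin (k - 1)) // #T = k} // T.1.toLeft = S} :=
      ⟨fun T => hS <| by simpa [← T.2, T.1.2] using card_toLeft_le (u := T.1.1)⟩
    exact ⟨.equivOfIsEmpty _ _⟩

end SupportFibers

theorem stmt_1_general {α : Type*} [Fintype α] {k : ℕ} (hk : 0 < k) (h : k + 1 ≤ Fintype.card α)
    (A : Finset (Sym α k)) (hint : ∀ s ∈ A, ∀ t ∈ A, ∃ x, x ∈ s ∧ x ∈ t) :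
    #A ≤ (Fintype.card α + k - 2).choose (k - 1) := by
  classical
  obtain ⟨e, he⟩ := exists_equiv_toLeft_eq_toFinset α k
  let toSet : Sym α k ↪ Finset (α ⊕ Fin (k - 1)) := e.toEmbedding.trans (.subtype _)
  have inl_mem_toSet {s : Sym α k} {x : α} (hx : x ∈ s) : Sum.inl x ∈ toSet s := by
    simpa [← mem_toLeft, toSet, he] using hx
  have intersecting : (A.map toSet : Set (Finset (α ⊕ Fin (k - 1)))).Intersecting := by
    simp only [coe_map, Set.Intersecting, Set.forall_mem_image, SetLike.mem_coe]
    intro s hs t ht hdisj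
    obtain ⟨x, hxs, hxt⟩ := hint s hs t ht
    exact disjoint_left.1 hdisj (inl_mem_toSet hxs) (inl_mem_toSet hxt)
  have sized : (A.map toSet : Set (Finset (α ⊕ Fin (k - 1)))).Sized k := by
    simp only [coe_map, Set.Sized, Set.forall_mem_image]
    exact fun s _ => (e s).2
  have card_points : Fintype.card (α ⊕ Fin (k - 1)) = Fintype.card α + k - 1 := by
    rw [Fintype.card_sum, Fintype.card_fin]
    omega
  calc #A = #(A.map toSet) := (card_map _).symm
    _ ≤ (Fintype.card (α ⊕ Fin (k - 1)) - 1).choose (k - 1) :=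
      erdos_ko_rado_of_fintype intersecting sized (by omega)
    _ = (Fintype.card α + k - 2).choose (k - 1) := by rw [card_points, Nat.sub_sub]

/-- If `m ≥ k + 1`, an intersecting collection of `k`-multisets from `{1,…,m}`
has size at most `C(m+k-2, k-1)`. -/
theorem stmt_1 (k m : ℕ) (hk : 0 < k) (hm : 0 < m) (h : k + 1 ≤ m)
    (A : Finset (Sym (Fin m) k))
    (hint : ∀ s ∈ A, ∀ t ∈ A, ∃ x : Fin m, x ∈ s ∧ x ∈ t) :
    A.card ≤ (m + k - 2).choose (k - 1) := by
  simpa using stmt_1_general hk (by simpa using h) A hint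
end

section
/- Let k and m be positive integers with m > k + 1. If A is an intersecting collection of k-multisets with elements from {1,…,m}, then |A| = C(m+k−2, k−1) holds if and only if there exists a fixed element x ∈ {1,…,m} such that A is exactly the collection of all k-multisets on {1,…,m} that contain x. -/
open Finset Numbering
open scoped Nat

/-!
For each `S ⊆ V` there are as many `k`-multisets on `V` with support `S` as `k`-subsets of
`V ⊕ Fin (k - 1)` with trace `S` on `V`, namely `(k - 1).choose (k - #S)`. An injection that turns
supports into traces maps an intersecting family of multisets to an intersecting family of
`k`-subsets of a set of `card V + k - 1 > 2 * k` points. If the family has the size claimed, its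
image is extremal for the Erdős–Ko–Rado theorem, hence a star. The centre lies in `V`: a star
centred in `Fin (k - 1)` would contain the images of all constant multisets, which do not intersect.

Uniqueness in Erdős–Ko–Rado comes from Katona's circle. In an extremal family, each cyclic
arrangement of the points has exactly `k` arcs in the family. If exchanging `x ∈ A` for `y ∉ A`
leaves the family, then on a circle where these two sets are consecutive arcs the `k` arcs must be
those through `x`; letting the circle vary, every `k`-set containing `x` and not `y` is in the
family, and this forces all members to contain `x`.
-/

section Circle

variable {n k : ℕ} {S : Finset (Fin n)}

lemma fin_val_sub_add_val_eq (a b : Fin n) :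
    b.val ≤ a.val ∧ (a - b).val + b.val = a.val ∨
      a.val < b.val ∧ (a - b).val + b.val = a.val + n := by
  obtain h | h := le_or_gt b a
  · have := Fin.coe_sub_iff_le.2 h
    omega
  · have := Fin.coe_sub_iff_lt.2 h
    omega

/-- Any two members of `S` are at distance less than `k` on the circle `Fin n`: the arcs of `k`
consecutive points which start at them intersect (if `2 * k ≤ n`, this is an equivalence). -/
def CyclicallyClose (k : ℕ) (S : Finset (Fin n)) : Prop :=
  ∀ i ∈ S, ∀ j ∈ S, (j - i).val < k ∨ (i - j).val < k

/-- Katona's pairing of the arcs of length `k` meeting a given one on a circle of `n` points: the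
offsets `t` and `t + (n - k)`, which belong to disjoint arcs, are both sent to `t`. -/
def katonaFold (n k t : ℕ) : ℕ :=
  if t < k then t else t - (n - k)

lemma CyclicallyClose.mapsTo_katonaFold (hS : CyclicallyClose k S) {a : Fin n} (ha : a ∈ S) :
    Set.MapsTo (fun s ↦ katonaFold n k (s - a).val) S (range k) := by
  intro s hs
  have hclose := hS a ha s hs
  have hsa := fin_val_sub_add_val_eq s a
  have has := fin_val_sub_add_val_eq a s
  simp only [katonaFold, coe_range, Set.mem_Iio]
  split_ifs <;> omega

lemma CyclicallyClose.injOn_katonaFold (hS : CyclicallyClose k S) (hn : 2 * k ≤ n) {a : Fin n}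
    (ha : a ∈ S) : Set.InjOn (fun s ↦ katonaFold n k (s - a).val) S := by
  intro s hs t ht hst
  have hclose_st := hS s hs t ht
  have hclose_as := hS a ha s hs
  have hclose_at := hS a ha t ht
  have hsa := fin_val_sub_add_val_eq s a
  have has := fin_val_sub_add_val_eq a s
  have hta := fin_val_sub_add_val_eq t a
  have hat := fin_val_sub_add_val_eq a t
  have hts := fin_val_sub_add_val_eq t s
  have hst' := fin_val_sub_add_val_eq s t
  simp only [katonaFold] at hst
  split_ifs at hst <;> omega

lemma CyclicallyClose.card_le (hS : CyclicallyClose k S) (hn : 2 * k ≤ n) : #S ≤ k := by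
  obtain rfl | ⟨a, ha⟩ := S.eq_empty_or_nonempty
  · simp
  · simpa using card_le_card_of_injOn _ (hS.mapsTo_katonaFold ha) (hS.injOn_katonaFold hn ha)

variable [NeZero n]

lemma CyclicallyClose.mem_or_mem_of_card_eq (hS : CyclicallyClose k S) (hn : 2 * k ≤ n)
    (hcard : #S = k) (h0 : 0 ∈ S) {i j : Fin n} (hi : i.val < k) (hj : j.val = i + (n - k)) :
    i ∈ S ∨ j ∈ S := by
  obtain ⟨s, hs, hsi⟩ := surjOn_of_injOn_of_card_le _ (hS.mapsTo_katonaFold h0)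
    (hS.injOn_katonaFold hn h0) (by simp [hcard]) (by simpa using hi : i.val ∈ (range k : Set ℕ))
  have hclose := hS 0 h0 s hs
  have hneg := fin_val_sub_add_val_eq 0 s
  simp only [katonaFold, sub_zero, Fin.val_zero] at hsi hclose hneg
  obtain rfl | rfl : s = i ∨ s = j := by split_ifs at hsi <;> omega
  exacts [.inl hs, .inr hs]

lemma CyclicallyClose.mem_of_card_eq (hS : CyclicallyClose k S) (hn : 2 * k < n) (hcard : #S = k)
    (h0 : 0 ∈ S) (h1 : 1 ∉ S) {i : Fin n} (hi : n < i + k) : i ∈ S := by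
  have hnot : ∀ t (ht : t < n), 0 < t → t < k → ⟨t, ht⟩ ∉ S := by
    intro t ht hpos
    induction t, hpos using Nat.le_induction with
    | base =>
      have h1' : (⟨_, ht⟩ : Fin n) = 1 := Fin.ext (by simp [Nat.mod_eq_of_lt ht])
      exact fun _ ↦ h1' ▸ h1
    | succ t _ ih =>
      intro htk hmem
      have hpartner := (hS.mem_or_mem_of_card_eq hn.le hcard h0 (i := ⟨t, by omega⟩)
        (j := ⟨t + (n - k), by omega⟩) (by grind) rfl).resolve_left (ih _ (by omega))
      -- The arcs that start at `t + 1` and at `t + (n - k)` are disjoint.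
      have hclose := hS _ hmem _ hpartner
      have hgap := fin_val_sub_add_val_eq (⟨t + (n - k), by omega⟩ : Fin n) ⟨t + 1, ht⟩
      have hgap' := fin_val_sub_add_val_eq ⟨t + 1, ht⟩ (⟨t + (n - k), by omega⟩ : Fin n)
      dsimp only at *
      omega
  exact (hS.mem_or_mem_of_card_eq hn.le hcard h0 (i := ⟨i + k - n, by omega⟩) (by grind)
    (by grind)).resolve_left (hnot _ _ (by omega) (by omega))

end Circle

section Arcs

variable {V : Type*} [Fintype V] [DecidableEq V] {k : ℕ} {f : Numbering V} {s t : Finset V}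

/-- The `k` consecutive points from position `i` on, when `V` is placed on a circle in the order
given by `f`: the arcs over which Katona's double counting runs. The subtraction is cyclic. -/
def cyclicArc (f : Numbering V) (k : ℕ) (i : Fin (Fintype.card V)) : Finset V :=
  {v | (f v - i).val < k}

lemma cyclicArc_eq_iff [Nonempty V] (hs : #s = k) {i} :
    cyclicArc f k i = s ↔ f.trans (Equiv.subRight i) ∈ prefixed s := by
  simp [cyclicArc, IsPrefix, Finset.ext_iff, hs, iff_comm]

lemma card_filter_cyclicArc_eq [Nonempty V] (hs : #s = k) (i : Fin (Fintype.card V)) :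
    #{f | cyclicArc f k i = s} = k ! * (Fintype.card V - k)! := by
  rw [← hs, ← card_prefixed]
  exact card_equiv ((Equiv.refl V).equivCongr (Equiv.subRight i)) fun f ↦ by
    simpa using cyclicArc_eq_iff rfl

lemma cyclicArc_eq_sdiff {i : Fin (Fintype.card V)} (hs : IsPrefix f s) (ht : IsPrefix f t)
    (hi : i.val = #s) (hst : #t = #s + k) : cyclicArc f k i = t \ s := by
  ext v
  simp only [cyclicArc, mem_filter_univ, mem_sdiff, hs v, ht v]
  have hsub := fin_val_sub_add_val_eq (f v) i
  have hcard := t.card_le_univ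
  omega

lemma cyclicArc_eq_union_compl {i : Fin (Fintype.card V)} (hs : IsPrefix f s) (ht : IsPrefix f t)
    (hi : i.val = #t) (hst : #s + Fintype.card V = #t + k) : cyclicArc f k i = s ∪ tᶜ := by
  ext v
  simp only [cyclicArc, mem_filter_univ, mem_union, mem_compl, hs v, ht v]
  have hsub := fin_val_sub_add_val_eq (f v) i
  omega

omit [DecidableEq V] in
lemma exists_numbering_forall_isPrefix (w : V → ℕ) :
    ∃ f : Numbering V, ∀ a, IsPrefix f {v | w v ≤ a} := by
  let e := Fintype.equivFin V
  let σ := (Tuple.sort (w ∘ e.symm)).trans e.symm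
  refine ⟨σ.symm, fun a v ↦ ?_⟩
  have hcard : #{p | (w ∘ σ) p ≤ a} = #{v | w v ≤ a} := card_equiv σ (by simp)
  have hmono : Monotone (w ∘ σ) := Tuple.monotone_sort (w ∘ e.symm)
  rw [← hcard, Tuple.lt_card_le_iff_apply_le_of_monotone hmono]
  simp

omit [DecidableEq V] in
lemma exists_numbering_forall_mem_isPrefix {C : Finset (Finset V)}
    (hC : IsChain (· ⊆ ·) (C : Set (Finset V))) :
    ∃ f : Numbering V, ∀ s ∈ C, IsPrefix f s := by
  classical
  obtain ⟨f, hf⟩ := exists_numbering_forall_isPrefix fun v ↦ #{t ∈ C | v ∉ t}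
  refine ⟨f, fun s hs ↦ ?_⟩
  have hlevel : ({v | #{t ∈ C | v ∉ t} ≤ #{t ∈ C | t ⊂ s}} : Finset V) = s := by
    ext v
    rw [mem_filter_univ]
    refine ⟨fun hle ↦ ?_, fun hv ↦ card_le_card fun t ht ↦ ?_⟩
    · by_contra hv
      refine hle.not_gt (card_lt_card ((ssubset_iff_of_subset fun t ht ↦ ?_).2 ⟨s, ?_, ?_⟩))
      · grind [LT.lt.subset]
      · grind
      · simp
    · have := hC.total hs (mem_filter.1 ht).1
      simp only [mem_filter, ssubset_iff_subset_ne] at *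
      grind
  exact hlevel ▸ hf _

end Arcs

section ArcStarts

variable {V : Type*} [Fintype V] [DecidableEq V] {k : ℕ} {F : Finset (Finset V)}

/-- The starting points of those arcs of length `k` of the cyclic arrangement `f` which are members
of the family `F`. -/
def arcStarts (F : Finset (Finset V)) (k : ℕ) (f : Numbering V) : Finset (Fin (Fintype.card V)) :=
  {i | cyclicArc f k i ∈ F}

lemma mem_arcStarts {f : Numbering V} {i : Fin (Fintype.card V)} :
    i ∈ arcStarts F k f ↔ cyclicArc f k i ∈ F :=
  mem_filter_univ i

lemma cyclicallyClose_arcStarts (hF : (F : Set (Finset V)).Intersecting) (f : Numbering V) :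
    CyclicallyClose k (arcStarts F k f) := by
  intro i hi j hj
  obtain ⟨v, hvi, hvj⟩ := not_disjoint_iff.1 (hF (mem_arcStarts.1 hi) (mem_arcStarts.1 hj))
  simp only [cyclicArc, mem_filter_univ] at hvi hvj
  have hfi := fin_val_sub_add_val_eq (f v) i
  have hfj := fin_val_sub_add_val_eq (f v) j
  have hij := fin_val_sub_add_val_eq i j
  have hji := fin_val_sub_add_val_eq j i
  omega

lemma sum_card_arcStarts [Nonempty V] (hF : (F : Set (Finset V)).Sized k) :
    ∑ f, #(arcStarts F k f) = Fintype.card V * (#F * (k ! * (Fintype.card V - k)!)) := by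
  have hfiber (i : Fin (Fintype.card V)) :
      #{f | cyclicArc f k i ∈ F} = #F * (k ! * (Fintype.card V - k)!) := by
    rw [← sum_card_fiberwise_eq_card_filter,
      sum_congr rfl fun s hs ↦ card_filter_cyclicArc_eq (hF hs) i, sum_const, smul_eq_mul]
  calc ∑ f : Numbering V, #{i | cyclicArc f k i ∈ F}
      = ∑ i, #{f : Numbering V | cyclicArc f k i ∈ F} :=
        sum_card_bipartiteAbove_eq_sum_card_bipartiteBelow _
    _ = Fintype.card V * (#F * (k ! * (Fintype.card V - k)!)) := by simp [hfiber]

lemma card_arcStarts_eq [Nonempty V] (hk : 0 < k) (hkn : 2 * k ≤ Fintype.card V)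
    (hF : (F : Set (Finset V)).Intersecting) (hFk : (F : Set (Finset V)).Sized k)
    (hcard : #F = (Fintype.card V - 1).choose (k - 1)) (f : Numbering V) :
    #(arcStarts F k f) = k := by
  have hchoose : Fintype.card V * #F = (Fintype.card V).choose k * k := by
    have := Nat.add_one_mul_choose_eq (Fintype.card V - 1) (k - 1)
    rwa [Nat.sub_add_cancel hk, Nat.sub_add_cancel (by omega), ← hcard] at this
  have hsum : ∑ f, #(arcStarts F k f) = ∑ _f : Numbering V, k := by
    rw [sum_card_arcStarts hFk, ← mul_assoc, hchoose, sum_const, card_univ, Fintype.card_numbering,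
      ← Nat.choose_mul_factorial_mul_factorial (show k ≤ Fintype.card V by omega), smul_eq_mul]
    ring
  exact (sum_eq_sum_iff_of_le fun f _ ↦ (cyclicallyClose_arcStarts hF f).card_le hkn).1 hsum f
    (mem_univ f)

end ArcStarts

section ErdosKoRado

variable {V : Type*} [DecidableEq V] {k : ℕ} {F : Finset (Finset V)}

lemma exists_exchange_notMem {A B : Finset V} (hA : A ∈ F) (hB : B ∉ F) (hAB : #A = #B) :
    ∃ A ∈ F, ∃ x ∈ A, ∃ y ∉ A, insert y (A.erase x) ∉ F := by
  induction hd : #(B \ A) using Nat.strong_induction_on generalizing A with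
  | _ d ih =>
    have hne : A ≠ B := fun h ↦ hB (h ▸ hA)
    obtain ⟨x, hxA, hxB⟩ := not_subset.1 fun h ↦ hne (eq_of_subset_of_card_le h hAB.ge)
    obtain ⟨y, hyB, hyA⟩ := not_subset.1 fun h ↦ hne (eq_of_subset_of_card_le h hAB.le).symm
    by_cases hmem : insert y (A.erase x) ∈ F
    · have hlt : #(B \ insert y (A.erase x)) < #(B \ A) :=
        card_lt_card ((ssubset_iff_of_subset (by grind)).2 ⟨y, by grind, by grind⟩)
      have hcard : #(insert y (A.erase x)) = #B := by
        rw [card_insert_of_notMem (by grind), card_erase_add_one hxA, hAB]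
      exact ih _ (hd ▸ hlt) hmem hcard rfl
    · exact ⟨A, hA, x, hxA, y, hyA, hmem⟩

variable [Fintype V]

lemma exists_numbering_cyclicArc_eq [Nonempty V] {A G : Finset V} {x y : V}
    (hA : #A = k) (hG : #G = k) (hx : x ∈ A) (hy : y ∉ A) (hxG : x ∈ G) (hyG : y ∉ G)
    (hGA : ¬ G ⊆ A) :
    ∃ (f : Numbering V) (i : Fin (Fintype.card V)), cyclicArc f k 0 = A ∧
      cyclicArc f k 1 = insert y (A.erase x) ∧ cyclicArc f k i = G ∧ Fintype.card V < i + k := by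
  -- The points are placed in the order `x`, `A ∩ G`, `A \ G`, `y`, outside `A ∪ G`, `G \ A`, so
  -- that `G` is the arc which starts with `G \ A` and wraps around.
  have hchain : IsChain (· ⊆ ·)
      (({∅, {x}, A ∩ G, A, insert y A, (G \ A)ᶜ} : Finset (Finset V)) : Set (Finset V)) := by
    intro s hs t ht _
    simp only [coe_insert, coe_singleton, Set.mem_insert_iff, Set.mem_singleton_iff] at hs ht
    rcases hs with rfl | rfl | rfl | rfl | rfl | rfl <;>
      rcases ht with rfl | rfl | rfl | rfl | rfl | rfl <;> grind [mem_compl]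
  obtain ⟨f, hf⟩ := exists_numbering_forall_mem_isPrefix hchain
  simp only [mem_insert, mem_singleton, forall_eq_or_imp, forall_eq] at hf
  obtain ⟨h_empty, h_x, h_inter, h_A, h_insert, h_compl⟩ := hf
  have hcard := card_compl (G \ A)
  have hle := (G \ A).card_le_univ
  have hdiff := card_pos.2 (sdiff_nonempty.2 hGA)
  have hinter : #(A ∩ G) + #(G \ A) = k := by rw [inter_comm, card_inter_add_card_sdiff, hG]
  have hinter_pos := card_pos.2 ⟨x, mem_inter.2 ⟨hx, hxG⟩⟩
  refine ⟨f, ⟨#(G \ A)ᶜ, by omega⟩, ?_, ?_, ?_, ?_⟩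
  · rw [cyclicArc_eq_sdiff h_empty h_A (by simp) (by simpa), sdiff_empty]
  · rw [cyclicArc_eq_sdiff h_x h_insert _ (by simp [hy, hA, add_comm])]
    · grind
    · rw [card_singleton, Fin.val_one', Nat.mod_eq_of_lt]
      exact Fintype.one_lt_card_iff.2 ⟨x, y, by grind⟩
  · rw [cyclicArc_eq_union_compl h_inter h_compl rfl (by omega)]
    grind [mem_compl]
  · grind

lemma mem_of_exchange_notMem (hkn : 2 * k < Fintype.card V)
    (hF : (F : Set (Finset V)).Intersecting) (hFk : (F : Set (Finset V)).Sized k)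
    (hcard : #F = (Fintype.card V - 1).choose (k - 1)) {A G : Finset V} {x y : V} (hA : A ∈ F)
    (hx : x ∈ A) (hy : y ∉ A) (hxy : insert y (A.erase x) ∉ F) (hG : #G = k) (hxG : x ∈ G)
    (hyG : y ∉ G) : G ∈ F := by
  have : Nonempty V := ⟨x⟩
  have hk : 0 < k := hG ▸ card_pos.2 ⟨x, hxG⟩
  by_cases hGA : G ⊆ A
  · rwa [eq_of_subset_of_card_le hGA (by rw [hFk hA, hG])]
  obtain ⟨f, i, h0, h1, hi, hik⟩ := exists_numbering_cyclicArc_eq (hFk hA) hG hx hy hxG hyG hGA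
  rw [← hi, ← mem_arcStarts]
  refine (cyclicallyClose_arcStarts hF f).mem_of_card_eq hkn
    (card_arcStarts_eq hk hkn.le hF hFk hcard f) ?_ ?_ hik
  · rwa [mem_arcStarts, h0]
  · rwa [mem_arcStarts, h1]

lemma exists_exchange_notMem_of_intersecting (hkn : 2 * k ≤ Fintype.card V)
    (hF : (F : Set (Finset V)).Intersecting) (hFk : (F : Set (Finset V)).Sized k)
    (hne : F.Nonempty) : ∃ A ∈ F, ∃ x ∈ A, ∃ y ∉ A, insert y (A.erase x) ∉ F := by
  obtain ⟨A, hA⟩ := hne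
  obtain ⟨B, hBA, hB⟩ : ∃ B ⊆ Aᶜ, #B = k :=
    exists_subset_card_eq (by rw [card_compl, hFk hA]; omega)
  have hdisj : Disjoint A B := disjoint_compl_right.mono_right hBA
  exact exists_exchange_notMem hA (fun hBF ↦ hF hA hBF hdisj) ((hFk hA).trans hB.symm)

theorem exists_eq_filter_mem_of_intersecting_of_card_eq
    (hkn : 2 * k < Fintype.card V) (hF : (F : Set (Finset V)).Intersecting)
    (hFk : (F : Set (Finset V)).Sized k) (hcard : #F = (Fintype.card V - 1).choose (k - 1)) :
    ∃ x, F = {G ∈ powersetCard k (univ : Finset V) | x ∈ G} := by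
  have hne : F.Nonempty := card_pos.1 (hcard ▸ Nat.choose_pos (by omega))
  obtain ⟨A, hA, x, hx, y, hy, hxy⟩ := exists_exchange_notMem_of_intersecting hkn.le hF hFk hne
  have hk : 0 < k := hFk hA ▸ card_pos.2 ⟨x, hx⟩
  have hmem : ∀ G ∈ F, x ∈ G := by
    intro G hG
    by_contra hxG
    have hroom : k ≤ #(insert y G)ᶜ := by
      have := card_insert_le y G
      rw [card_compl]
      grind [hFk hG]
    obtain ⟨H, hxH, hHG, hH⟩ : ∃ H, {x} ⊆ H ∧ H ⊆ (insert y G)ᶜ ∧ #H = k :=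
      exists_subsuperset_card_eq (by grind [mem_compl]) (by simpa) hroom
    have hHF : H ∈ F :=
      mem_of_exchange_notMem hkn hF hFk hcard hA hx hy hxy hH (by grind) (by grind [mem_compl])
    exact hF hG hHF (disjoint_left.2 (by grind [mem_compl]))
  refine ⟨x, eq_of_subset_of_card_le (fun G hG ↦ ?_) ?_⟩
  · exact mem_filter.2 ⟨hFk.subset_powersetCard_univ hG, hmem G hG⟩
  · have := card_filter_powersetCard_subset {x} (univ : Finset V) k (subset_univ _) (by simpa)
    simpa [hcard] using this.le

end ErdosKoRado

section Multisets

variable {V : Type*} [DecidableEq V] {k : ℕ}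

lemma card_finset_sym_s2 (T : Finset V) (n : ℕ) : #(T.sym n) = (#T).multichoose n := by
  rw [← Fintype.card_coe T, ← Sym.card_sym_eq_multichoose, ← card_univ, ← sym_univ]
  conv_lhs => rw [← attach_map_val (s := T), sym_map, card_map]
  rfl

lemma card_filter_sym_le {p : Multiset V} {T : Finset V} (hpT : ∀ v ∈ p, v ∈ T)
    (hpk : p.card ≤ k) : #{s ∈ T.sym k | p ≤ s.toMultiset} = (#T).multichoose (k - p.card) := by
  rw [← card_finset_sym_s2]
  symm
  refine card_bij (fun t _ ↦ ⟨p + t.toMultiset, by simp [hpk]⟩) ?_ ?_ ?_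
  · intro t ht
    rw [mem_sym_iff] at ht
    refine mem_filter.2 ⟨mem_sym_iff.2 fun v hv ↦ ?_, Multiset.le_add_right _ _⟩
    exact (Multiset.mem_add.1 hv).elim (hpT v) (ht v)
  · exact fun t _ t' _ h ↦ Sym.coe_injective (add_left_cancel (congrArg Subtype.val h))
  · simp only [mem_sym_iff, mem_filter]
    rintro s ⟨hsT, hps⟩
    refine ⟨⟨s.toMultiset - p, by rw [Multiset.card_sub hps, s.card_coe]⟩, fun v hv ↦ hsT v ?_, ?_⟩
    · exact Multiset.mem_of_le (Multiset.sub_le_self s.toMultiset p) hv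
    · exact Subtype.ext (add_tsub_cancel_of_le hps)

lemma card_filter_sym_toFinset_eq [Fintype V] {S : Finset V} (hS : #S ≤ k) :
    #{s : Sym V k | s.toMultiset.toFinset = S} = (k - 1).choose (k - #S) := by
  have hfilter : ({s | s.toMultiset.toFinset = S} : Finset (Sym V k)) =
      {s ∈ S.sym k | S.val ≤ s.toMultiset} := by
    ext s
    simp [mem_sym_iff, Multiset.le_iff_subset S.nodup, Finset.ext_iff, Multiset.subset_iff,
      iff_def, forall_and]
  rw [hfilter, card_filter_sym_le (fun _ ↦ id) hS, Nat.multichoose_eq, card_val]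
  congr 1
  omega

lemma card_filter_mem_sym [Fintype V] (hk : 0 < k) (x : V) :
    #{s : Sym V k | x ∈ s} = (Fintype.card V + k - 2).choose (k - 1) := by
  have hcard := card_filter_sym_le (k := k) (p := {x}) (T := univ) (by simp) (by simpa)
  rw [Multiset.card_singleton, Nat.multichoose_eq, card_univ, sym_univ] at hcard
  simp only [Multiset.singleton_le] at hcard
  calc #{s : Sym V k | x ∈ s} = (Fintype.card V + (k - 1) - 1).choose (k - 1) := hcard
    _ = (Fintype.card V + k - 2).choose (k - 1) := by congr 1; omega

lemma card_filter_toLeft_eq {W : Type*} [Fintype V] [Fintype W] {S : Finset V} (hS : #S ≤ k) :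
    #{B ∈ powersetCard k (univ : Finset (V ⊕ W)) | B.toLeft = S} =
      (Fintype.card W).choose (k - #S) := by
  rw [← card_univ, ← card_powersetCard]
  refine card_nbij' toRight S.disjSum ?_ ?_ ?_ ?_
  · simp only [Set.MapsTo, mem_coe, mem_filter, mem_powersetCard_univ]
    rintro B ⟨hB, rfl⟩
    have := B.card_toLeft_add_card_toRight
    omega
  · intro T hT
    simp only [mem_coe, mem_powersetCard_univ] at hT
    simp [hT, hS]
  · simp only [Set.LeftInvOn, mem_coe, mem_filter]
    rintro B ⟨-, rfl⟩
    exact toLeft_disjSum_toRight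
  · exact fun T _ ↦ toRight_disjSum

lemma exists_embedding_of_card_fiber_le {α β γ : Type*} [Fintype α] [DecidableEq γ] {f : α → γ}
    {t : Finset β} {g : β → γ} (h : ∀ c, #{a | f a = c} ≤ #{b ∈ t | g b = c}) :
    ∃ ψ : α ↪ β, ∀ a, ψ a ∈ t ∧ g (ψ a) = f a := by
  have hfiber (c : γ) : Nonempty ({a // a ∈ ({a | f a = c} : Finset α)} ↪
      {b // b ∈ ({b ∈ t | g b = c} : Finset β)}) :=
    Function.Embedding.nonempty_of_card_le (by simpa only [Fintype.card_coe] using h c)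
  let e (c : γ) := (hfiber c).some
  let ψ (a : α) : β := e (f a) ⟨a, (mem_filter_univ a).2 rfl⟩
  have hψ (a : α) : ψ a ∈ t ∧ g (ψ a) = f a := mem_filter.1 (e (f a) _).2
  have eq_of_apply_eq (c c' : γ) (hc : c = c') (a a') (h : (e c a).1 = (e c' a').1) :
      a.1 = a'.1 := by
    subst hc
    exact congrArg _ ((e c).injective (Subtype.ext h))
  have hinj : Function.Injective ψ := fun a a' h ↦
    eq_of_apply_eq (f a) (f a') (by rw [← (hψ a).2, h, (hψ a').2]) _ _ h
  exact ⟨⟨ψ, hinj⟩, hψ⟩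

lemma exists_embedding_sym_toLeft_eq [Fintype V] :
    ∃ ψ : Sym V k ↪ Finset (V ⊕ Fin (k - 1)),
      ∀ s, ψ s ∈ powersetCard k univ ∧ (ψ s).toLeft = s.toMultiset.toFinset := by
  refine exists_embedding_of_card_fiber_le fun S ↦ ?_
  by_cases hS : #S ≤ k
  · rw [card_filter_sym_toFinset_eq hS, card_filter_toLeft_eq hS, Fintype.card_fin]
  · rw [filter_false_of_mem, card_empty]
    · exact Nat.zero_le _
    · rintro s - rfl
      exact hS ((Multiset.toFinset_card_le _).trans_eq s.2)

end Multisets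

section Stars

variable {V : Type*} [DecidableEq V] {k : ℕ} {A : Finset (Sym V k)}
  {ψ : Sym V k ↪ Finset (V ⊕ Fin (k - 1))}

lemma inl_mem_iff_of_toLeft_eq (hψ : ∀ s, (ψ s).toLeft = s.toMultiset.toFinset) {s : Sym V k}
    {v : V} : .inl v ∈ ψ s ↔ v ∈ s := by
  rw [← mem_toLeft, hψ, Multiset.mem_toFinset, Sym.mem_coe]

lemma intersecting_map_of_toLeft_eq (hψ : ∀ s, (ψ s).toLeft = s.toMultiset.toFinset)
    (hA : ∀ s ∈ A, ∀ t ∈ A, ∃ x, x ∈ s ∧ x ∈ t) :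
    (A.map ψ : Set (Finset (V ⊕ Fin (k - 1)))).Intersecting := by
  simp only [Set.Intersecting, mem_coe, forall_mem_map]
  intro s hs t ht
  obtain ⟨v, hvs, hvt⟩ := hA s hs t ht
  exact not_disjoint_iff.2
    ⟨.inl v, (inl_mem_iff_of_toLeft_eq hψ).2 hvs, (inl_mem_iff_of_toLeft_eq hψ).2 hvt⟩

lemma inr_mem_replicate (hψk : ∀ s, #(ψ s) = k) (hψ : ∀ s, (ψ s).toLeft = s.toMultiset.toFinset)
    (hk : k ≠ 0) (j : Fin (k - 1)) (v : V) : .inr j ∈ ψ (Sym.replicate k v) := by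
  have hleft : (ψ (Sym.replicate k v)).toLeft = {v} := by
    rw [hψ, Sym.coe_replicate, Multiset.toFinset_replicate, if_neg hk]
  have hright : (ψ (Sym.replicate k v)).toRight = univ := by
    have hcard := (ψ (Sym.replicate k v)).card_toLeft_add_card_toRight
    rw [hψk, hleft, card_singleton] at hcard
    exact (card_eq_iff_eq_univ _).1 (by rw [Fintype.card_fin]; omega)
  exact mem_toRight.1 (hright ▸ mem_univ j)

lemma exists_eq_filter_mem_of_map_eq [Fintype V] [Nontrivial V] (hk : k ≠ 0)
    (hA : ∀ s ∈ A, ∀ t ∈ A, ∃ x, x ∈ s ∧ x ∈ t) (hψk : ∀ s, #(ψ s) = k)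
    (hψ : ∀ s, (ψ s).toLeft = s.toMultiset.toFinset) {z : V ⊕ Fin (k - 1)}
    (hz : A.map ψ = {G ∈ powersetCard k (univ : Finset (V ⊕ Fin (k - 1))) | z ∈ G}) :
    ∃ x, A = ({s | x ∈ s} : Finset (Sym V k)) := by
  have hmem (s : Sym V k) : s ∈ A ↔ z ∈ ψ s := by
    rw [← mem_map' ψ, hz, mem_filter, mem_powersetCard_univ, and_iff_right (hψk s)]
  obtain x | j := z
  · exact ⟨x, by ext s; rw [hmem, inl_mem_iff_of_toLeft_eq hψ, mem_filter_univ]⟩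
  · have hreplicate (v : V) : Sym.replicate k v ∈ A := (hmem _).2 (inr_mem_replicate hψk hψ hk j v)
    obtain ⟨u, v, huv⟩ := exists_pair_ne V
    obtain ⟨w, hwu, hwv⟩ := hA _ (hreplicate u) _ (hreplicate v)
    exact (huv ((Sym.mem_replicate.1 hwu).2.symm.trans (Sym.mem_replicate.1 hwv).2)).elim

end Stars

theorem stmt_2_general {V : Type*} [Fintype V] [DecidableEq V] {k : ℕ} (hk : 0 < k)
    (hkV : k + 1 < Fintype.card V) {A : Finset (Sym V k)}
    (hA : ∀ s ∈ A, ∀ t ∈ A, ∃ x, x ∈ s ∧ x ∈ t) :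
    #A = (Fintype.card V + k - 2).choose (k - 1) ↔ ∃ x, A = ({s | x ∈ s} : Finset (Sym V k)) := by
  refine ⟨fun hcard ↦ ?_, ?_⟩
  · obtain ⟨ψ, hψ⟩ := exists_embedding_sym_toLeft_eq (V := V) (k := k)
    simp only [mem_powersetCard_univ, forall_and] at hψ
    obtain ⟨hψk, hψ⟩ := hψ
    have : Nontrivial V := Fintype.one_lt_card_iff_nontrivial.1 (by omega)
    have hcardF : #(A.map ψ) = (Fintype.card (V ⊕ Fin (k - 1)) - 1).choose (k - 1) := by
      rw [card_map, hcard, Fintype.card_sum, Fintype.card_fin]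
      congr 1
      omega
    obtain ⟨z, hz⟩ := exists_eq_filter_mem_of_intersecting_of_card_eq
      (by rw [Fintype.card_sum, Fintype.card_fin]; omega) (intersecting_map_of_toLeft_eq hψ hA)
      (by simpa [Set.Sized] using fun s _ ↦ hψk s) hcardF
    exact exists_eq_filter_mem_of_map_eq hk.ne' hA hψk hψ hz
  · rintro ⟨x, rfl⟩
    exact card_filter_mem_sym hk x

/-- If `m > k + 1` and `A` is an intersecting collection of `k`-multisets from `{1,…,m}`,
then `|A| = C(m+k-2, k-1)` iff `A` is the collection of all `k`-multisets containing
some fixed element `x`. -/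
theorem stmt_2 (k m : ℕ) (hk : 0 < k) (hm : 0 < m) (h : k + 1 < m)
    (A : Finset (Sym (Fin m) k))
    (hint : ∀ s ∈ A, ∀ t ∈ A, ∃ x : Fin m, x ∈ s ∧ x ∈ t) :
    A.card = (m + k - 2).choose (k - 1) ↔
      ∃ x : Fin m, A = Finset.univ.filter (fun s : Sym (Fin m) k => x ∈ s) := by
  simpa using stmt_2_general hk (by simpa using h) hint
end

section
/- Let k and m be positive integers and let n = m + k − 1. For every intersecting collection A of k-multisets on {1,…,m}, there exists an intersecting family of k-element subsets of {1,…,n} of the same cardinality as A. In particular, the maximum size of an intersecting collection of k-multisets on {1,…,m} is at most the maximum size of an intersecting family of k-subsets of {1,…,n}. -/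
/-!
A `k`-multiset with support `S` is `S` plus an arbitrary multiset of cardinality `k - #S` on `S`,
so there are `(k - 1).choose (k - #S)` of them: exactly as many as there are ways to complete `S`
to a `k`-set by adding points from a reservoir of `k - 1` new ones. Matching the two, one support
at a time, embeds the `k`-multisets into the `k`-sets. Supports are kept, hence so are common
elements.
-/

section Support

open scoped Finset

variable {α : Type*}

/-- The multiset on `α` obtained from a multiset `t` on `S` by raising the multiplicity of each
element of `S` by one. This parametrizes the multisets with support `S`. -/
def addSupport (S : Finset α) {j : ℕ} (t : Sym S j) : Sym α (#S + j) :=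
  Sym.mk (S.val + (t : Multiset S).map (↑)) (by simp)

theorem coe_addSupport (S : Finset α) {j : ℕ} (t : Sym S j) :
    (addSupport S t : Multiset α) = S.val + (t : Multiset S).map (↑) :=
  rfl

theorem addSupport_injective (S : Finset α) (j : ℕ) :
    Function.Injective (addSupport S (j := j)) := by
  intro t u htu
  have hmap : (t : Multiset S).map ((↑) : S → α) = (u : Multiset S).map (↑) := by
    have hcoe := congrArg Sym.toMultiset htu
    rwa [coe_addSupport, coe_addSupport, add_right_inj] at hcoe
  exact Sym.ext (Multiset.map_injective Subtype.val_injective hmap)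

variable [DecidableEq α]

/-- The `k`-multisets whose support (set of elements, without multiplicity) is `S`. -/
def symsWithSupport (S : Finset α) (k : ℕ) : Set (Sym α k) :=
  {s | (s : Multiset α).toFinset = S}

theorem range_addSupport (S : Finset α) (j : ℕ) :
    Set.range (addSupport S (j := j)) = symsWithSupport S (#S + j) := by
  ext s
  constructor
  · rintro ⟨t, rfl⟩
    ext x
    simp +contextual [coe_addSupport]
  · intro (hs : (s : Multiset α).toFinset = S)
    have hle : S.val ≤ s :=
      (congrArg Finset.val hs).symm.trans_le (Multiset.dedup_le _)
    have hmem : ∀ x ∈ (s : Multiset α) - S.val, x ∈ S := fun x hx =>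
      hs ▸ Multiset.mem_toFinset.2 (Multiset.mem_of_le tsub_le_self hx)
    lift (s : Multiset α) - S.val to Multiset S using hmem with t ht
    have hadd : S.val + t.map (↑) = (s : Multiset α) := by rw [ht, add_tsub_cancel_of_le hle]
    have hcard : t.card = j := by simpa using congrArg Multiset.card hadd
    exact ⟨Sym.mk t hcard, Sym.ext ((coe_addSupport S _).trans hadd)⟩

theorem encard_symsWithSupport (S : Finset α) (j : ℕ) :
    (symsWithSupport S (#S + j)).encard = (#S + j - 1).choose j := by
  rw [← range_addSupport, ← Set.image_univ, (addSupport_injective S j).encard_image,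
    Set.encard_univ, ENat.card_eq_coe_fintype_card, Sym.card_sym_eq_choose, Fintype.card_coe]

theorem card_le_of_mem_symsWithSupport {S : Finset α} {k : ℕ} {s : Sym α k}
    (hs : s ∈ symsWithSupport S k) : #S ≤ k := by
  obtain rfl : (s : Multiset α).toFinset = S := hs
  simpa using Multiset.toFinset_card_le (s : Multiset α)

theorem encard_symsWithSupport_le (S : Finset α) (k : ℕ) :
    (symsWithSupport S k).encard ≤ (k - 1).choose (k - #S) := by
  obtain hempty | ⟨s, hs⟩ := (symsWithSupport S k).eq_empty_or_nonempty
  · simp [hempty]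
  · obtain ⟨j, rfl⟩ := Nat.exists_eq_add_of_le (card_le_of_mem_symsWithSupport hs)
    rw [encard_symsWithSupport, Nat.add_sub_cancel_left]

theorem exists_mapsTo_injOn_symsWithSupport (S : Finset α) (k : ℕ) :
    ∃ f : Sym α k → Finset (Fin (k - 1)),
      Set.MapsTo f (symsWithSupport S k) (Set.powersetCard (Fin (k - 1)) (k - #S)) ∧
      Set.InjOn f (symsWithSupport S k) := by
  have hle := encard_symsWithSupport_le S k
  have hcard : (Set.powersetCard (Fin (k - 1)) (k - #S)).encard = (k - 1).choose (k - #S) := by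
    rw [Set.encard, ENat.card_eq_coe_natCard, Set.powersetCard.card, Nat.card_fin]
  exact (Set.finite_of_encard_le_coe hle).exists_injOn_of_encard_le (hle.trans_eq hcard.symm)

variable (α) in
theorem exists_embedding_finset_sum (k : ℕ) :
    ∃ φ : Sym α k ↪ Finset (α ⊕ Fin (k - 1)),
      ∀ s, #(φ s) = k ∧ (φ s).toLeft = (s : Multiset α).toFinset := by
  choose f hmaps hinj using fun S : Finset α => exists_mapsTo_injOn_symsWithSupport S k
  let φ (s : Sym α k) := (s : Multiset α).toFinset.disjSum (f (s : Multiset α).toFinset s)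
  have hφ : Function.Injective φ := by
    intro s t hst
    obtain ⟨hsupport, hf⟩ := Finset.disjSum_inj.1 hst
    rw [hsupport] at hf
    exact hinj _ hsupport rfl hf
  refine ⟨⟨φ, hφ⟩, fun s => ⟨?_, Finset.toLeft_disjSum⟩⟩
  have hs : s ∈ symsWithSupport (s : Multiset α).toFinset k := rfl
  have hcard : #(f (s : Multiset α).toFinset s) = k - #(s : Multiset α).toFinset := hmaps _ hs
  rw [Function.Embedding.coeFn_mk, Finset.card_disjSum, hcard,
    Nat.add_sub_cancel' (card_le_of_mem_symsWithSupport hs)]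

end Support

theorem exists_intersecting_finsets_of_intersecting_syms {α β : Type*} [DecidableEq β] {k : ℕ}
    (e : α ⊕ Fin (k - 1) ↪ β) (A : Finset (Sym α k))
    (hA : ∀ s ∈ A, ∀ t ∈ A, ∃ x : α, x ∈ s ∧ x ∈ t) :
    ∃ F : Finset (Finset β),
      (∀ s ∈ F, s.card = k) ∧
      (∀ s ∈ F, ∀ t ∈ F, (s ∩ t).Nonempty) ∧
      F.card = A.card := by
  classical
  obtain ⟨φ, hφ⟩ := exists_embedding_finset_sum α k
  have mem_φ {s : Sym α k} {x : α} (hx : x ∈ s) : Sum.inl x ∈ φ s := by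
    rw [← Finset.mem_toLeft, (hφ s).2]
    exact Multiset.mem_toFinset.2 hx
  refine ⟨A.map (φ.trans (Finset.mapEmbedding e).toEmbedding), ?_, ?_, Finset.card_map _⟩
  · simp only [Finset.forall_mem_map]
    intro s _
    exact (Finset.card_map e).trans (hφ s).1
  · simp only [Finset.forall_mem_map]
    intro s hs t ht
    obtain ⟨x, hxs, hxt⟩ := hA s hs t ht
    exact ⟨e (Sum.inl x), Finset.mem_inter.2
      ⟨Finset.mem_map_of_mem e (mem_φ hxs), Finset.mem_map_of_mem e (mem_φ hxt)⟩⟩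

theorem stmt_13_general {α β : Type*} [DecidableEq β] {k : ℕ} (e : α ⊕ Fin (k - 1) ↪ β) :
    (∀ A : Finset (Sym α k),
      (∀ s ∈ A, ∀ t ∈ A, ∃ x : α, x ∈ s ∧ x ∈ t) →
      ∃ F : Finset (Finset β),
        (∀ s ∈ F, s.card = k) ∧
        (∀ s ∈ F, ∀ t ∈ F, (s ∩ t).Nonempty) ∧
        F.card = A.card) ∧
    (∀ A : Finset (Sym α k),
      (∀ s ∈ A, ∀ t ∈ A, ∃ x : α, x ∈ s ∧ x ∈ t) →
      ∀ N : ℕ,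
        (∀ F : Finset (Finset β),
          (∀ s ∈ F, s.card = k) → (∀ s ∈ F, ∀ t ∈ F, (s ∩ t).Nonempty) → F.card ≤ N) →
        A.card ≤ N) := by
  refine ⟨exists_intersecting_finsets_of_intersecting_syms e, fun A hA N hN => ?_⟩
  obtain ⟨F, hsized, hinter, hcard⟩ := exists_intersecting_finsets_of_intersecting_syms e A hA
  exact hcard ▸ hN F hsized hinter

/-- Let `n = m + k - 1`. Every intersecting collection of `k`-multisets on `{1,…,m}`
gives rise to an intersecting family of `k`-subsets of `{1,…,n}` of the same
cardinality; in particular the maximum size of an intersecting collection of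
`k`-multisets on `{1,…,m}` is at most the maximum size of an intersecting family of
`k`-subsets of `{1,…,n}`. -/
theorem stmt_13 (k m n : ℕ) (hk : 0 < k) (hm : 0 < m) (hn : n = m + k - 1) :
    (∀ A : Finset (Sym (Fin m) k),
      (∀ s ∈ A, ∀ t ∈ A, ∃ x : Fin m, x ∈ s ∧ x ∈ t) →
      ∃ F : Finset (Finset (Fin n)),
        (∀ s ∈ F, s.card = k) ∧
        (∀ s ∈ F, ∀ t ∈ F, (s ∩ t).Nonempty) ∧
        F.card = A.card) ∧
    (∀ A : Finset (Sym (Fin m) k),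
      (∀ s ∈ A, ∀ t ∈ A, ∃ x : Fin m, x ∈ s ∧ x ∈ t) →
      ∀ N : ℕ,
        (∀ F : Finset (Finset (Fin n)),
          (∀ s ∈ F, s.card = k) → (∀ s ∈ F, ∀ t ∈ F, (s ∩ t).Nonempty) → F.card ≤ N) →
        A.card ≤ N) :=
  stmt_13_general (finSumFinEquiv.trans (finCongr (by omega))).toEmbedding
end

section
/- Let m be a positive even integer. The maximum cardinality of an intersecting family of (m/2)-element subsets of {1,…,m} is (1/2)·C(m, m/2). -/
/-!
Complementation acts freely on the sets of size `m / 2`, and an intersecting family contains at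
most one member of each pair `{s, sᶜ}`; the sets through a fixed point contain exactly one.
-/

section

open Finset
open scoped FinsetFamily

section BooleanAlgebra

variable {β : Type*} [BooleanAlgebra β] {U : Finset β}

theorem two_mul_card_le_of_intersecting_of_compls_eq {s : Finset β} (hU : Uᶜˢ = U) (hsU : s ⊆ U)
    (hs : (s : Set β).Intersecting) : 2 * #s ≤ #U := by
  classical
  have hdisj : Disjoint s sᶜˢ := hs.disjoint_map_compl
  have hcompl : sᶜˢ ⊆ U := hU ▸ compls_subset_compls.2 hsU
  calc
    2 * #s = #(s ∪ sᶜˢ) := by rw [card_union_of_disjoint hdisj, card_compls, two_mul]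
    _ ≤ #U := card_le_card (union_subset hsU hcompl)

theorem two_mul_card_filter_of_compls_eq {p : β → Prop} [DecidablePred p] (hU : Uᶜˢ = U)
    (hp : ∀ b ∈ U, p bᶜ ↔ ¬p b) : 2 * #{b ∈ U | p b} = #U := by
  have hcompl : {b ∈ U | p b}ᶜˢ = {b ∈ U | ¬p b} := by
    ext b
    rw [mem_compls, mem_filter, mem_filter, ← mem_compls, hU]
    exact and_congr_right (hp b)
  rw [← card_filter_add_card_filter_not (s := U) p, ← hcompl, card_compls, two_mul]

end BooleanAlgebra

variable {α : Type*} [DecidableEq α]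

theorem intersecting_setOf_mem (a : α) : {s : Finset α | a ∈ s}.Intersecting :=
  fun _ hs _ ht ↦ not_disjoint_iff.2 ⟨a, hs, ht⟩

variable [Fintype α] {k : ℕ}

theorem compls_powersetCard_univ (hk : k ≤ Fintype.card α) :
    (powersetCard k (univ : Finset α))ᶜˢ = powersetCard (Fintype.card α - k) univ := by
  ext s
  have hs : #s ≤ Fintype.card α := s.card_le_univ
  simp only [mem_compls, mem_powersetCard_univ, card_compl]
  omega

theorem compls_powersetCard_univ_of_two_mul_eq (hk : 2 * k = Fintype.card α) :
    (powersetCard k (univ : Finset α))ᶜˢ = powersetCard k univ := by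
  rw [compls_powersetCard_univ (by omega), ← hk, two_mul, Nat.add_sub_cancel]

theorem two_mul_card_le_choose_of_intersecting {F : Finset (Finset α)}
    (hk : 2 * k = Fintype.card α) (hsized : (F : Set (Finset α)).Sized k)
    (hF : (F : Set (Finset α)).Intersecting) : 2 * #F ≤ (Fintype.card α).choose k := by
  rw [← card_univ, ← card_powersetCard]
  exact two_mul_card_le_of_intersecting_of_compls_eq (compls_powersetCard_univ_of_two_mul_eq hk)
    (subset_powersetCard_univ_iff.2 hsized) hF

theorem two_mul_card_filter_mem_powersetCard (hk : 2 * k = Fintype.card α) (a : α) :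
    2 * #{s ∈ powersetCard k (univ : Finset α) | a ∈ s} = (Fintype.card α).choose k := by
  rw [← card_univ, ← card_powersetCard]
  exact two_mul_card_filter_of_compls_eq (compls_powersetCard_univ_of_two_mul_eq hk)
    fun _ _ ↦ mem_compl

theorem stmt_18_general [Nonempty α] (hk : 2 * k = Fintype.card α) :
    (∃ F : Finset (Finset α), (F : Set (Finset α)).Sized k ∧
      (F : Set (Finset α)).Intersecting ∧ 2 * #F = (Fintype.card α).choose k) ∧
    (∀ F : Finset (Finset α), (F : Set (Finset α)).Sized k →
      (F : Set (Finset α)).Intersecting → 2 * #F ≤ (Fintype.card α).choose k) := by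
  obtain ⟨a⟩ := ‹Nonempty α›
  refine ⟨⟨{s ∈ powersetCard k (univ : Finset α) | a ∈ s}, ?sized, ?intersecting,
    two_mul_card_filter_mem_powersetCard hk a⟩,
    fun _ ↦ two_mul_card_le_choose_of_intersecting hk⟩
  case sized => exact (Set.sized_powersetCard univ k).mono (filter_subset _ _)
  case intersecting => exact (intersecting_setOf_mem a).mono fun s hs ↦ (mem_filter.1 hs).2

end

/-- For `m` even and positive, the maximum cardinality of an intersecting family of
`(m/2)`-subsets of `{1,…,m}` is `(1/2)·C(m, m/2)` (stated multiplied through by 2):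
some intersecting family attains it and no intersecting family exceeds it. -/
theorem stmt_18 (m : ℕ) (hm : 0 < m) (heven : Even m) :
    (∃ F : Finset (Finset (Fin m)),
      (∀ s ∈ F, s.card = m / 2) ∧
      (∀ s ∈ F, ∀ t ∈ F, (s ∩ t).Nonempty) ∧
      2 * F.card = m.choose (m / 2)) ∧
    (∀ F : Finset (Finset (Fin m)),
      (∀ s ∈ F, s.card = m / 2) →
      (∀ s ∈ F, ∀ t ∈ F, (s ∩ t).Nonempty) →
      2 * F.card ≤ m.choose (m / 2)) := by
  have : Nonempty (Fin m) := ⟨⟨0, hm⟩⟩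
  have hhalf : 2 * (m / 2) = Fintype.card (Fin m) := by
    rw [Nat.two_mul_div_two_of_even heven, Fintype.card_fin]
  simpa only [Set.Sized, Set.Intersecting, Finset.not_disjoint_iff_nonempty_inter,
    Finset.mem_coe, Fintype.card_fin] using stmt_18_general hhalf
end
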